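/- Let Λ be a unimodular lattice in ℝ^d and f(τ) = |τ|_+. Then for every k ∈ {1,…,d}: (a) ω_k(Λ) ≥ ω̂_k(Λ) ≥ −1 + 1/d; (b) −1 ≤ ψ̲_k(Λ,f) ≤ ψ̄_k(Λ,f) ≤ d−1; (c) for every real γ > −1, ω_k(Λ) ≥ γ if and only if ψ̲_k(Λ,f) ≤ −γ/(1+γ), and ω̂_k(Λ) ≥ γ if and only if ψ̄_k(Λ,f) ≤ −γ/(1+γ); consequently (1+ω_k(Λ))(1+ψ̲_k(Λ,f)) = 1 and (1+ω̂_k(Λ))(1+ψ̄_k(Λ,f)) = 1, with the convention that ω_k(Λ) = +∞ when ψ̲_k(Λ,f) = −1 and ω̂_k(Λ) = +∞ when ψ̄_k(Λ,f) = −1. -/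

import Mathlib

open Filter

noncomputable section

/-- A unimodular lattice in `ℝ^d`: the set of integer linear combinations of a basis of `ℝ^d`
whose matrix has determinant `±1`. -/
def IsUnimodularLattice (d : ℕ) (Λ : Set (Fin d → ℝ)) : Prop :=
  ∃ B : Matrix (Fin d) (Fin d) ℝ, |B.det| = 1 ∧
    Λ = {v | ∃ x : Fin d → ℤ, v = B.mulVec fun i => (x i : ℝ)}

/-- The dual lattice `Λ* = {w : ⟨w, z⟩ ∈ ℤ for all z ∈ Λ}`. -/
def dualLattice (d : ℕ) (Λ : Set (Fin d → ℝ)) : Set (Fin d → ℝ) :=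
  {w | ∀ z ∈ Λ, ∃ c : ℤ, ∑ i, w i * z i = (c : ℝ)}

/-- The `k`-th successive minimum `λ_k(B_τ, Λ)` of the box
`B_τ = {z : |z_i| ≤ exp (τ i)}` with respect to the lattice `Λ`. -/
def succMin (d : ℕ) (Λ : Set (Fin d → ℝ)) (τ : Fin d → ℝ) (k : ℕ) : ℝ :=
  sInf {lam : ℝ | 0 < lam ∧ ∃ v : Fin k → (Fin d → ℝ),
    (∀ l, v l ∈ Λ) ∧ LinearIndependent ℝ v ∧ ∀ l i, |v l i| ≤ lam * Real.exp (τ i)}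

/-- `L_k(Λ, τ) = log λ_k(B_τ, Λ)`. -/
def Lk (d : ℕ) (Λ : Set (Fin d → ℝ)) (τ : Fin d → ℝ) (k : ℕ) : ℝ :=
  Real.log (succMin d Λ τ k)

/-- The filter on `ℝ^d` of `τ ∈ T` (i.e. `∑ τ_i = 0`) with `|τ| = max_i |τ_i| → ∞`. -/
def Tfilter (d : ℕ) : Filter (Fin d → ℝ) :=
  (Filter.atTop.comap fun τ : Fin d → ℝ => ⨆ i, |τ i|) ⊓
    Filter.principal {τ | ∑ i, τ i = 0}

/-- `ψ̲_k(Λ, f)` for `f(τ) = |τ|_+ = max_i τ_i`: the liminf of `L_k(Λ,τ)/|τ|_+` over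
`τ ∈ T` with `|τ| → ∞`. -/
def psiLowF (d : ℕ) (Λ : Set (Fin d → ℝ)) (k : ℕ) : ℝ :=
  liminf (fun τ : Fin d → ℝ => Lk d Λ τ k / ⨆ i, τ i) (Tfilter d)

/-- `ψ̄_k(Λ, f)` for `f(τ) = |τ|_+ = max_i τ_i`: the limsup of `L_k(Λ,τ)/|τ|_+` over
`τ ∈ T` with `|τ| → ∞`. -/
def psiUpF (d : ℕ) (Λ : Set (Fin d → ℝ)) (k : ℕ) : ℝ :=
  limsup (fun τ : Fin d → ℝ => Lk d Λ τ k / ⨆ i, τ i) (Tfilter d)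

/-- `Π(z) = ∏ i, |z_i|^(1/d)`. -/
def PiProd (d : ℕ) (z : Fin d → ℝ) : ℝ := ∏ i, |z i| ^ ((1 : ℝ) / d)

/-- The supremum norm `|z| = max_i |z_i|`. -/
def supNorm {d : ℕ} (z : Fin d → ℝ) : ℝ := ⨆ i, |z i|

/-- The box `P(v) = {z : |z_i| ≤ v_i}` contains `k` linearly independent points of `Λ`. -/
def containsK (d : ℕ) (Λ : Set (Fin d → ℝ)) (v : Fin d → ℝ) (k : ℕ) : Prop :=
  ∃ w : Fin k → (Fin d → ℝ), (∀ l, w l ∈ Λ) ∧ LinearIndependent ℝ w ∧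
    ∀ l i, |w l i| ≤ v i

/-- The `k`-th Diophantine exponent `ω_k(Λ)` of a lattice. -/
def omegaLatK (d : ℕ) (Λ : Set (Fin d → ℝ)) (k : ℕ) : EReal :=
  sSup (Real.toEReal '' {γ : ℝ | ∀ T : ℝ, ∃ v : Fin d → ℝ, (∀ i, 0 < v i) ∧
    PiProd d v = supNorm v ^ (-γ) ∧ T < supNorm v ∧ containsK d Λ v k})

/-- The `k`-th uniform Diophantine exponent `ω̂_k(Λ)` of a lattice. -/
def omegaLatHatK (d : ℕ) (Λ : Set (Fin d → ℝ)) (k : ℕ) : EReal :=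
  sSup (Real.toEReal '' {γ : ℝ | ∃ T : ℝ, ∀ v : Fin d → ℝ, (∀ i, 0 < v i) →
    PiProd d v = supNorm v ^ (-γ) → T < supNorm v → containsK d Λ v k})

/-!
Every `v` with positive coordinates is uniquely of the form `v_i = e^{a + τ_i}` with `∑ τ_i = 0`,
and then `Π(v) = e^a`, `|v| = e^{a + |τ|₊}`. Hence, for `γ > -1`, the condition `Π(v) = |v|^{-γ}`
reads `a = g |τ|₊` with `g = -γ / (1 + γ)`: the boxes `P(v)` admitted in the definition of the
exponents are exactly the dilates `e^{g |τ|₊} B_τ`, and `|v| → ∞` means `|τ| → ∞`. Such a dilate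
contains `k` independent points of `Λ` essentially when `L_k(Λ, τ) / |τ|₊ ≤ g`. As `γ ↦ g` is a
decreasing involution, a supremum over `γ` turns into a lower or upper limit of `L_k(Λ, τ) / |τ|₊`.

The nonzero points of `Λ` stay away from `0`, which bounds `L_k(Λ, τ)` below by `-|τ|₊` up to a
constant, and `Λ` contains `k` independent points, which bounds it above by `(d - 1) |τ|₊` up to a
constant.
-/

open scoped Topology

section ZeroSum

variable {ι : Type*} [Fintype ι] {τ : ι → ℝ}

theorem neg_le_card_sub_one_mul_iSup (hτ : ∑ i, τ i = 0) (i : ι) :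
    -τ i ≤ ((Fintype.card ι : ℝ) - 1) * ⨆ j, τ j := by
  classical
  calc -τ i = ∑ j ∈ Finset.univ.erase i, τ j := by
        linarith [Finset.add_sum_erase Finset.univ τ (Finset.mem_univ i)]
    _ ≤ (Finset.univ.erase i).card • ⨆ j, τ j :=
        Finset.sum_le_card_nsmul _ _ _ fun j _ => Finite.le_ciSup τ j
    _ = ((Fintype.card ι : ℝ) - 1) * ⨆ j, τ j := by
        rw [nsmul_eq_mul, Finset.cast_card_erase_of_mem (Finset.mem_univ i), Finset.card_univ]

theorem iSup_abs_le_card_mul_iSup (hτ : ∑ i, τ i = 0) :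
    ⨆ i, |τ i| ≤ (Fintype.card ι : ℝ) * ⨆ i, τ i := by
  have hcard_mul_nonneg : 0 ≤ (Fintype.card ι : ℝ) * ⨆ i, τ i := by
    simpa [hτ] using Finset.sum_le_card_nsmul Finset.univ τ _ fun i _ => Finite.le_ciSup τ i
  refine Real.iSup_le (fun i => ?_) hcard_mul_nonneg
  have hcard : (1 : ℝ) ≤ Fintype.card ι := by exact_mod_cast Fintype.card_pos_iff.2 ⟨i⟩
  have hsup : 0 ≤ ⨆ j, τ j := nonneg_of_mul_nonneg_right hcard_mul_nonneg (by linarith)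
  refine abs_le'.2 ⟨(Finite.le_ciSup τ i).trans (le_mul_of_one_le_left hsup hcard), ?_⟩
  linarith [neg_le_card_sub_one_mul_iSup hτ i]

end ZeroSum

section Tfilter

variable {d : ℕ}

theorem hasBasis_Tfilter :
    (Tfilter d).HasBasis (fun _ : ℝ => True) fun M => {τ | M < ⨆ i, τ i ∧ ∑ i, τ i = 0} := by
  refine ⟨fun s => ⟨fun hs => ?_, fun ⟨M, _, hM⟩ => ?_⟩⟩
  · obtain ⟨M, -, hM⟩ := ((atTop_basis_Ioi.comap _).inf_principal _).mem_iff.1 hs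
    refine ⟨M, trivial, fun τ ⟨hsup, hτ⟩ => hM ⟨?_, hτ⟩⟩
    exact hsup.trans_le (ciSup_mono (Set.finite_range _).bddAbove fun i => le_abs_self (τ i))
  · refine ((atTop_basis_Ioi.comap _).inf_principal _).mem_iff.2
      ⟨d * M, trivial, fun τ ⟨habs, hτ⟩ => hM ⟨?_, hτ⟩⟩
    have hmul : d * M < d * ⨆ i, τ i := by
      simpa only [Fintype.card_fin] using habs.trans_le (iSup_abs_le_card_mul_iSup hτ)
    exact lt_of_mul_lt_mul_left hmul d.cast_nonneg

theorem tendsto_iSup_Tfilter : Tendsto (fun τ : Fin d → ℝ => ⨆ i, τ i) (Tfilter d) atTop :=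
  (hasBasis_Tfilter.tendsto_iff atTop_basis_Ioi).2 fun M _ => ⟨M, trivial, fun _ h => h.1⟩

theorem eventually_iSup_pos_Tfilter : ∀ᶠ τ in Tfilter d, 0 < ⨆ i, τ i :=
  tendsto_iSup_Tfilter.eventually_gt_atTop 0

theorem eventually_sum_eq_zero_Tfilter : ∀ᶠ τ in Tfilter d, ∑ i, τ i = 0 :=
  hasBasis_Tfilter.eventually_iff.2 ⟨0, trivial, fun _ h => h.2⟩

theorem tendsto_add_div_iSup_Tfilter (a b : ℝ) :
    Tendsto (fun τ : Fin d → ℝ => a + b / ⨆ i, τ i) (Tfilter d) (𝓝 a) := by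
  simpa using (tendsto_iSup_Tfilter.const_div_atTop b).const_add a

theorem neBot_Tfilter (hd : 2 ≤ d) : (Tfilter d).NeBot := by
  have : Nontrivial (Fin d) := Fin.nontrivial_iff_two_le.2 hd
  obtain ⟨a, b, hab⟩ := exists_pair_ne (Fin d)
  refine hasBasis_Tfilter.neBot_iff.2 fun {M} _ =>
    ⟨Pi.single a (M + 1) + Pi.single b (-(M + 1)), ?_, by simp [Finset.sum_add_distrib]⟩
  refine lt_of_lt_of_le ?_ (Finite.le_ciSup _ a)
  simp [hab]

end Tfilter

section Box

variable {d k : ℕ} {Λ : Set (Fin d → ℝ)}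

theorem containsK.mono {v w : Fin d → ℝ} (h : containsK d Λ v k) (hvw : v ≤ w) :
    containsK d Λ w k :=
  let ⟨x, hxΛ, hx, hxv⟩ := h
  ⟨x, hxΛ, hx, fun l i => (hxv l i).trans (hvw i)⟩

theorem supNorm_const_mul_exp [NeZero d] {c : ℝ} (hc : 0 ≤ c) (τ : Fin d → ℝ) :
    supNorm (fun i => c * Real.exp (τ i)) = c * Real.exp (⨆ i, τ i) := by
  rw [Real.exp_monotone.map_ciSup_of_continuousAt Real.continuous_exp.continuousAt
    (Set.finite_range τ).bddAbove, Real.mul_iSup_of_nonneg hc]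
  simp only [supNorm, abs_mul, abs_of_nonneg hc, Real.abs_exp]

theorem exists_pos_le_supNorm_of_containsK (hΛ : 0 ∉ closure (Λ \ {0})) (hk : 1 ≤ k) :
    ∃ c > 0, ∀ v, containsK d Λ v k → c ≤ supNorm v := by
  obtain ⟨c, hc, hball⟩ := Metric.nhds_basis_ball.mem_iff.1 (isClosed_closure.compl_mem_nhds hΛ)
  refine ⟨c, hc, fun v ⟨w, hwΛ, hw, hwv⟩ => ?_⟩
  have hnorm_ge : c ≤ ‖w ⟨0, hk⟩‖ := by
    by_contra! hlt
    exact hball (mem_ball_zero_iff.2 hlt) (subset_closure ⟨hwΛ _, hw.ne_zero _⟩)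
  have habs_le (i : Fin d) : |v i| ≤ supNorm v := Finite.le_ciSup (fun i => |v i|) i
  refine hnorm_ge.trans ((pi_norm_le_iff_of_nonneg ?_).2 fun i => ?_)
  · exact Real.iSup_nonneg fun i => abs_nonneg (v i)
  · exact (hwv _ i).trans ((le_abs_self _).trans (habs_le i))

theorem exists_containsK_mul_exp_mul_exp (hk : k ≤ Set.finrank ℝ Λ) :
    ∃ C > 0, ∀ (τ : Fin d → ℝ) (r : ℝ), (∀ i, -τ i ≤ r) →
      containsK d Λ (fun i => C * Real.exp r * Real.exp (τ i)) k := by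
  obtain ⟨w, hwΛ, -, hw⟩ := Submodule.exists_fun_fin_finrank_span_eq ℝ Λ
  refine ⟨1 + ‖w‖, by positivity, fun τ r hr =>
    ⟨w ∘ Fin.castLE hk, fun l => hwΛ _, hw.comp _ (Fin.castLE_injective hk), fun l i => ?_⟩⟩
  have hone_le : 1 ≤ Real.exp (r + τ i) := Real.one_le_exp (by linarith [hr i])
  calc |w (Fin.castLE hk l) i| ≤ ‖w‖ := (norm_le_pi_norm _ i).trans (norm_le_pi_norm w _)
    _ ≤ (1 + ‖w‖) * 1 := by linarith
    _ ≤ (1 + ‖w‖) * Real.exp (r + τ i) := by gcongr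
    _ = (1 + ‖w‖) * Real.exp r * Real.exp (τ i) := by rw [Real.exp_add, mul_assoc]

end Box

section SuccMin

variable {d k : ℕ} {Λ : Set (Fin d → ℝ)}

theorem succMin_le_of_containsK {τ : Fin d → ℝ} {lam : ℝ} (hlam : 0 < lam)
    (h : containsK d Λ (fun i => lam * Real.exp (τ i)) k) : succMin d Λ τ k ≤ lam :=
  csInf_le ⟨0, fun _ hx => hx.1.le⟩ ⟨hlam, h⟩

theorem exists_pos_containsK (hk : k ≤ Set.finrank ℝ Λ) (τ : Fin d → ℝ) :
    ∃ lam > 0, containsK d Λ (fun i => lam * Real.exp (τ i)) k := by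
  obtain ⟨C, hC, hcontains⟩ := exists_containsK_mul_exp_mul_exp hk
  exact ⟨C * Real.exp ‖τ‖, by positivity,
    hcontains τ ‖τ‖ fun i => (neg_le_abs _).trans (norm_le_pi_norm τ i)⟩

theorem containsK_of_succMin_lt (hk : k ≤ Set.finrank ℝ Λ) {τ : Fin d → ℝ} {lam : ℝ}
    (h : succMin d Λ τ k < lam) : containsK d Λ (fun i => lam * Real.exp (τ i)) k := by
  obtain ⟨μ, ⟨-, hμ⟩, hlt⟩ := exists_lt_of_csInf_lt (exists_pos_containsK hk τ) h
  exact containsK.mono hμ fun i => by gcongr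

theorem exists_mul_exp_neg_iSup_le_succMin [NeZero d] (hΛ : 0 ∉ closure (Λ \ {0})) (hk1 : 1 ≤ k)
    (hk : k ≤ Set.finrank ℝ Λ) :
    ∃ c > 0, ∀ τ, c * Real.exp (-⨆ i, τ i) ≤ succMin d Λ τ k := by
  obtain ⟨c, hc, hc_le⟩ := exists_pos_le_supNorm_of_containsK hΛ hk1
  refine ⟨c, hc, fun τ => le_csInf (exists_pos_containsK hk τ) fun lam ⟨hlam, hcontains⟩ => ?_⟩
  rw [Real.exp_neg, ← div_eq_mul_inv, div_le_iff₀ (Real.exp_pos _),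
    ← supNorm_const_mul_exp hlam.le]
  exact hc_le _ hcontains

theorem exists_succMin_le_mul_exp (hk : k ≤ Set.finrank ℝ Λ) :
    ∃ C > 0, ∀ τ, ∑ i, τ i = 0 → succMin d Λ τ k ≤ C * Real.exp ((d - 1) * ⨆ i, τ i) := by
  obtain ⟨C, hC, hcontains⟩ := exists_containsK_mul_exp_mul_exp hk
  refine ⟨C, hC, fun τ hτ => succMin_le_of_containsK (by positivity) (hcontains τ _ fun i => ?_)⟩
  simpa only [Fintype.card_fin] using neg_le_card_sub_one_mul_iSup hτ i

theorem succMin_pos [NeZero d] (hΛ : 0 ∉ closure (Λ \ {0})) (hk1 : 1 ≤ k)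
    (hk : k ≤ Set.finrank ℝ Λ) (τ : Fin d → ℝ) : 0 < succMin d Λ τ k :=
  let ⟨_, hc, hle⟩ := exists_mul_exp_neg_iSup_le_succMin hΛ hk1 hk
  lt_of_lt_of_le (by positivity) (hle τ)

end SuccMin

/-- The half-sides of the box `e^{g |τ|₊} B_τ`. For `g = -γ / (1 + γ)` they parametrize the `v` with
`Π(v) = |v|^{-γ}`. -/
def dilatedBox {ι : Type*} (g : ℝ) (τ : ι → ℝ) : ι → ℝ :=
  fun i => Real.exp (g * ⨆ j, τ j) * Real.exp (τ i)

/-- The ratio `L_k(Λ, τ) / |τ|₊`, whose lower and upper limits are `ψ̲_k(Λ, f)` and `ψ̄_k(Λ, f)`. -/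
def logMinRatio {d : ℕ} (Λ : Set (Fin d → ℝ)) (k : ℕ) (τ : Fin d → ℝ) : ℝ :=
  Lk d Λ τ k / ⨆ i, τ i

section LogMinRatio

variable {d k : ℕ} [NeZero d] {Λ : Set (Fin d → ℝ)} (hΛ : 0 ∉ closure (Λ \ {0})) (hk1 : 1 ≤ k)
  (hk : k ≤ Set.finrank ℝ Λ)

include hΛ hk1 hk

theorem logMinRatio_le_of_containsK {τ : Fin d → ℝ} (hsup : 0 < ⨆ i, τ i) {g : ℝ}
    (h : containsK d Λ (dilatedBox g τ) k) : logMinRatio Λ k τ ≤ g := by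
  rw [logMinRatio, div_le_iff₀ hsup, Lk, Real.log_le_iff_le_exp (succMin_pos hΛ hk1 hk τ)]
  exact succMin_le_of_containsK (Real.exp_pos _) h

theorem containsK_of_logMinRatio_lt {τ : Fin d → ℝ} (hsup : 0 < ⨆ i, τ i) {g : ℝ}
    (h : logMinRatio Λ k τ < g) : containsK d Λ (dilatedBox g τ) k := by
  rw [logMinRatio, div_lt_iff₀ hsup, Lk, Real.log_lt_iff_lt_exp (succMin_pos hΛ hk1 hk τ)] at h
  exact containsK_of_succMin_lt hk h

theorem exists_eventually_le_logMinRatio :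
    ∃ b : ℝ, ∀ᶠ τ in Tfilter d, -1 + b / ⨆ i, τ i ≤ logMinRatio Λ k τ := by
  obtain ⟨c, hc, hle⟩ := exists_mul_exp_neg_iSup_le_succMin hΛ hk1 hk
  refine ⟨Real.log c, eventually_iSup_pos_Tfilter.mono fun τ hsup => ?_⟩
  have hlog := Real.log_le_log (by positivity) (hle τ)
  rw [Real.log_mul hc.ne' (Real.exp_ne_zero _), Real.log_exp] at hlog
  rw [logMinRatio, le_div_iff₀ hsup, add_mul, div_mul_cancel₀ _ hsup.ne', Lk]
  linarith

theorem exists_eventually_logMinRatio_le :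
    ∃ b : ℝ, ∀ᶠ τ in Tfilter d, logMinRatio Λ k τ ≤ (d - 1) + b / ⨆ i, τ i := by
  obtain ⟨C, hC, hle⟩ := exists_succMin_le_mul_exp hk
  refine ⟨Real.log C, ?_⟩
  filter_upwards [eventually_iSup_pos_Tfilter, eventually_sum_eq_zero_Tfilter] with τ hsup hτ
  have hlog := Real.log_le_log (succMin_pos hΛ hk1 hk τ) (hle τ hτ)
  rw [Real.log_mul hC.ne' (Real.exp_ne_zero _), Real.log_exp] at hlog
  rw [logMinRatio, div_le_iff₀ hsup, add_mul, div_mul_cancel₀ _ hsup.ne', Lk]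
  linarith

theorem isBoundedUnder_ge_logMinRatio :
    (Tfilter d).IsBoundedUnder (· ≥ ·) (logMinRatio Λ k) :=
  let ⟨b, hb⟩ := exists_eventually_le_logMinRatio hΛ hk1 hk
  (tendsto_add_div_iSup_Tfilter (-1) b).isBoundedUnder_ge.mono_ge hb

theorem isBoundedUnder_le_logMinRatio :
    (Tfilter d).IsBoundedUnder (· ≤ ·) (logMinRatio Λ k) :=
  let ⟨b, hb⟩ := exists_eventually_logMinRatio_le hΛ hk1 hk
  (tendsto_add_div_iSup_Tfilter _ b).isBoundedUnder_le.mono_le hb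

variable [(Tfilter d).NeBot]

theorem neg_one_le_psiLowF : -1 ≤ psiLowF d Λ k := by
  obtain ⟨b, hb⟩ := exists_eventually_le_logMinRatio hΛ hk1 hk
  have htendsto := tendsto_add_div_iSup_Tfilter (d := d) (-1) b
  rw [← htendsto.liminf_eq]
  exact liminf_le_liminf hb htendsto.isBoundedUnder_ge
    (isBoundedUnder_le_logMinRatio hΛ hk1 hk).isCoboundedUnder_ge

theorem psiLowF_le_psiUpF : psiLowF d Λ k ≤ psiUpF d Λ k :=
  liminf_le_limsup (isBoundedUnder_le_logMinRatio hΛ hk1 hk)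
    (isBoundedUnder_ge_logMinRatio hΛ hk1 hk)

theorem psiUpF_le_sub_one : psiUpF d Λ k ≤ d - 1 := by
  obtain ⟨b, hb⟩ := exists_eventually_logMinRatio_le hΛ hk1 hk
  have htendsto := tendsto_add_div_iSup_Tfilter (d := d) (d - 1) b
  rw [← htendsto.limsup_eq]
  exact limsup_le_limsup hb (isBoundedUnder_ge_logMinRatio hΛ hk1 hk).isCoboundedUnder_le
    htendsto.isBoundedUnder_le

end LogMinRatio

section Parametrization

variable {d : ℕ} [NeZero d]

theorem exists_eq_exp_mul_exp {v : Fin d → ℝ} (hv : ∀ i, 0 < v i) :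
    ∃ (a : ℝ) (τ : Fin d → ℝ), ∑ i, τ i = 0 ∧ v = fun i => Real.exp a * Real.exp (τ i) := by
  set a : ℝ := (∑ i, Real.log (v i)) / d with ha
  refine ⟨a, fun i => Real.log (v i) - a, ?_, funext fun i => ?_⟩
  · rw [Finset.sum_sub_distrib, Finset.sum_const, Finset.card_univ, Fintype.card_fin, nsmul_eq_mul,
      ha, mul_div_cancel₀ _ (NeZero.ne (d : ℝ)), sub_self]
  · rw [← Real.exp_add, add_sub_cancel, Real.exp_log (hv i)]

theorem PiProd_exp_mul_exp (a : ℝ) {τ : Fin d → ℝ} (hτ : ∑ i, τ i = 0) :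
    PiProd d (fun i => Real.exp a * Real.exp (τ i)) = Real.exp a := by
  have hfactor (i : Fin d) :
      |Real.exp a * Real.exp (τ i)| ^ (1 / d : ℝ) = Real.exp ((a + τ i) * (1 / d)) := by
    rw [← Real.exp_add, Real.abs_exp, Real.exp_mul]
  have hsum : ∑ i, (a + τ i) = d * a := by simp [Finset.sum_add_distrib, hτ]
  simp only [PiProd, hfactor]
  rw [← Real.exp_sum, ← Finset.sum_mul, hsum, mul_one_div, mul_div_cancel_left₀ _ (NeZero.ne _)]

variable {γ : ℝ} (hγ : -1 < γ)

include hγ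

theorem PiProd_eq_supNorm_rpow_iff (a : ℝ) {τ : Fin d → ℝ} (hτ : ∑ i, τ i = 0) :
    PiProd d (fun i => Real.exp a * Real.exp (τ i)) =
        supNorm (fun i => Real.exp a * Real.exp (τ i)) ^ (-γ) ↔
      a = -γ / (1 + γ) * ⨆ i, τ i := by
  have hne : 1 + γ ≠ 0 := by linarith
  rw [supNorm_const_mul_exp (Real.exp_pos a).le, PiProd_exp_mul_exp a hτ, ← Real.exp_add,
    ← Real.exp_mul, Real.exp_eq_exp, div_mul_eq_mul_div, eq_div_iff hne]
  constructor <;> intro h <;> linarith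

theorem supNorm_dilatedBox (τ : Fin d → ℝ) :
    supNorm (dilatedBox (-γ / (1 + γ)) τ) = Real.exp ((⨆ i, τ i) / (1 + γ)) := by
  have hne : 1 + γ ≠ 0 := by linarith
  unfold dilatedBox
  rw [supNorm_const_mul_exp (Real.exp_pos _).le, ← Real.exp_add]
  congr 1
  field_simp
  ring

theorem pos_and_PiProd_eq_iff_exists_dilatedBox {v : Fin d → ℝ} :
    (∀ i, 0 < v i) ∧ PiProd d v = supNorm v ^ (-γ) ↔
      ∃ τ, ∑ i, τ i = 0 ∧ v = dilatedBox (-γ / (1 + γ)) τ := by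
  constructor
  · rintro ⟨hpos, hprod⟩
    obtain ⟨a, τ, hτ, rfl⟩ := exists_eq_exp_mul_exp hpos
    obtain rfl := (PiProd_eq_supNorm_rpow_iff hγ a hτ).1 hprod
    exact ⟨τ, hτ, rfl⟩
  · rintro ⟨τ, hτ, rfl⟩
    exact ⟨fun i => mul_pos (Real.exp_pos _) (Real.exp_pos _),
      (PiProd_eq_supNorm_rpow_iff hγ _ hτ).2 rfl⟩

theorem eventually_dilatedBox_iff {Q : (Fin d → ℝ) → Prop} :
    (∀ᶠ τ in Tfilter d, Q (dilatedBox (-γ / (1 + γ)) τ)) ↔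
      ∃ T : ℝ, ∀ v : Fin d → ℝ, (∀ i, 0 < v i) →
        PiProd d v = supNorm v ^ (-γ) → T < supNorm v → Q v := by
  have hpos : 0 < 1 + γ := by linarith
  rw [hasBasis_Tfilter.eventually_iff]
  constructor
  · rintro ⟨M, -, hM⟩
    refine ⟨Real.exp (M / (1 + γ)), fun v hv hprod hlt => ?_⟩
    obtain ⟨τ, hτ, rfl⟩ := (pos_and_PiProd_eq_iff_exists_dilatedBox hγ).1 ⟨hv, hprod⟩
    rw [supNorm_dilatedBox hγ, Real.exp_lt_exp, div_lt_div_iff_of_pos_right hpos] at hlt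
    exact hM ⟨hlt, hτ⟩
  · rintro ⟨T, hT⟩
    refine ⟨T * (1 + γ), trivial, fun τ ⟨hlt, hτ⟩ => ?_⟩
    obtain ⟨hv, hprod⟩ := (pos_and_PiProd_eq_iff_exists_dilatedBox hγ).2 ⟨τ, hτ, rfl⟩
    refine hT _ hv hprod ?_
    rw [supNorm_dilatedBox hγ]
    linarith [(lt_div_iff₀ hpos).2 hlt, Real.add_one_le_exp ((⨆ i, τ i) / (1 + γ))]

theorem frequently_dilatedBox_iff {Q : (Fin d → ℝ) → Prop} :
    (∃ᶠ τ in Tfilter d, Q (dilatedBox (-γ / (1 + γ)) τ)) ↔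
      ∀ T : ℝ, ∃ v : Fin d → ℝ, (∀ i, 0 < v i) ∧
        PiProd d v = supNorm v ^ (-γ) ∧ T < supNorm v ∧ Q v := by
  rw [Filter.Frequently, eventually_dilatedBox_iff hγ (Q := fun v => ¬Q v)]
  push Not
  rfl

end Parametrization

section DualExponent

/-- The exponent `ω` with `(1 + ω) (1 + ψ) = 1`, understood as `+∞` when `ψ ≤ -1`; it expresses
`ω_k` and `ω̂_k` through `ψ̲_k` and `ψ̄_k`. -/
def dualExponent (ψ : ℝ) : EReal :=
  if ψ ≤ -1 then ⊤ else (((1 + ψ)⁻¹ - 1 : ℝ) : EReal)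

variable {γ ψ : ℝ}

theorem dualExponent_of_le (hψ : ψ ≤ -1) : dualExponent ψ = ⊤ := if_pos hψ

theorem dualExponent_of_lt (hψ : -1 < ψ) : dualExponent ψ = (((1 + ψ)⁻¹ - 1 : ℝ) : EReal) :=
  if_neg hψ.not_ge

theorem neg_one_lt_neg_div_one_add (hγ : -1 < γ) : -1 < -γ / (1 + γ) := by
  rw [lt_div_iff₀ (by linarith)]
  linarith

theorem coe_le_dualExponent_iff (hγ : -1 < γ) :
    (γ : EReal) ≤ dualExponent ψ ↔ ψ ≤ -γ / (1 + γ) := by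
  rcases le_or_gt ψ (-1) with hψ | hψ
  · simpa [dualExponent_of_le hψ] using hψ.trans (neg_one_lt_neg_div_one_add hγ).le
  · rw [dualExponent_of_lt hψ, EReal.coe_le_coe_iff, le_sub_iff_add_le, ← one_div,
      le_div_iff₀ (by linarith), le_div_iff₀ (by linarith)]
    constructor <;> intro h <;> linarith

theorem coe_lt_dualExponent_iff (hγ : -1 < γ) :
    (γ : EReal) < dualExponent ψ ↔ ψ < -γ / (1 + γ) := by
  rcases le_or_gt ψ (-1) with hψ | hψ
  · simpa [dualExponent_of_le hψ, EReal.coe_lt_top] using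
      hψ.trans_lt (neg_one_lt_neg_div_one_add hγ)
  · rw [dualExponent_of_lt hψ, EReal.coe_lt_coe_iff, lt_sub_iff_add_lt, ← one_div,
      lt_div_iff₀ (by linarith), lt_div_iff₀ (by linarith)]
    constructor <;> intro h <;> linarith

theorem neg_one_lt_dualExponent (ψ : ℝ) : ((-1 : ℝ) : EReal) < dualExponent ψ := by
  rcases le_or_gt ψ (-1) with hψ | hψ
  · exact dualExponent_of_le hψ ▸ EReal.coe_lt_top _
  · rw [dualExponent_of_lt hψ, EReal.coe_lt_coe_iff]
    linarith [inv_pos.2 (show 0 < 1 + ψ by linarith)]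

theorem dualExponent_antitone : Antitone dualExponent := by
  intro ψ ψ' hle
  rcases le_or_gt ψ (-1) with hψ | hψ
  · exact dualExponent_of_le hψ ▸ le_top
  · rw [dualExponent_of_lt hψ, dualExponent_of_lt (hψ.trans_le hle), EReal.coe_le_coe_iff]
    gcongr
    linarith

theorem mul_eq_one_of_dualExponent_eq {a : ℝ} (ha : dualExponent ψ = a) :
    (1 + a) * (1 + ψ) = 1 := by
  rcases le_or_gt ψ (-1) with hψ | hψ
  · exact absurd (dualExponent_of_le hψ ▸ ha).symm (EReal.coe_ne_top a)
  · rw [dualExponent_of_lt hψ, EReal.coe_eq_coe_iff] at ha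
    rw [← ha, add_sub_cancel, inv_mul_cancel₀ (by linarith)]

theorem neg_one_add_one_div_le_dualExponent {D : ℝ} (hD : 0 < D) (hψ : ψ ≤ D - 1) :
    ((-1 + 1 / D : ℝ) : EReal) ≤ dualExponent ψ := by
  rw [coe_le_dualExponent_iff (by linarith [one_div_pos.2 hD])]
  convert hψ using 1
  field_simp
  ring

theorem sSup_coe_image_eq_dualExponent {S : Set ℝ}
    (hle : ∀ γ ∈ S, -1 < γ → ψ ≤ -γ / (1 + γ)) (hlt : ∀ γ, -1 < γ → ψ < -γ / (1 + γ) → γ ∈ S) :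
    sSup (Real.toEReal '' S) = dualExponent ψ := by
  refine le_antisymm (sSup_le ?_) (le_of_forall_lt fun c hc => ?_)
  · rintro _ ⟨γ, hγS, rfl⟩
    rcases le_or_gt γ (-1) with hγ | hγ
    · exact (EReal.coe_le_coe_iff.2 hγ).trans (neg_one_lt_dualExponent ψ).le
    · exact (coe_le_dualExponent_iff hγ).2 (hle γ hγS hγ)
  · obtain ⟨γ, hmax_lt, hγψ⟩ :=
      EReal.lt_iff_exists_real_btwn.1 (max_lt hc (neg_one_lt_dualExponent ψ))
    obtain ⟨hcγ, hγ⟩ := max_lt_iff.1 hmax_lt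
    rw [EReal.coe_lt_coe_iff] at hγ
    exact hcγ.trans_le (le_sSup ⟨γ, hlt γ hγ ((coe_lt_dualExponent_iff hγ).1 hγψ), rfl⟩)

end DualExponent

section Transference

variable {d k : ℕ} [NeZero d] [(Tfilter d).NeBot] {Λ : Set (Fin d → ℝ)}
  (hΛ : 0 ∉ closure (Λ \ {0})) (hk1 : 1 ≤ k) (hk : k ≤ Set.finrank ℝ Λ)

include hΛ hk1 hk

theorem omegaLatK_eq_dualExponent : omegaLatK d Λ k = dualExponent (psiLowF d Λ k) := by
  refine sSup_coe_image_eq_dualExponent (fun γ hγS hγ => ?_) fun γ hγ hlt => ?_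
  · have hcontains := (frequently_dilatedBox_iff hγ).2 hγS
    refine liminf_le_of_frequently_le ?_ (isBoundedUnder_ge_logMinRatio hΛ hk1 hk)
    exact (hcontains.and_eventually eventually_iSup_pos_Tfilter).mono fun τ ⟨hτ, hsup⟩ =>
      logMinRatio_le_of_containsK hΛ hk1 hk hsup hτ
  · have hratio := frequently_lt_of_liminf_lt
      (isBoundedUnder_le_logMinRatio hΛ hk1 hk).isCoboundedUnder_ge hlt
    refine (frequently_dilatedBox_iff hγ).1 ?_
    exact (hratio.and_eventually eventually_iSup_pos_Tfilter).mono fun τ ⟨hτ, hsup⟩ =>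
      containsK_of_logMinRatio_lt hΛ hk1 hk hsup hτ

theorem omegaLatHatK_eq_dualExponent : omegaLatHatK d Λ k = dualExponent (psiUpF d Λ k) := by
  refine sSup_coe_image_eq_dualExponent (fun γ hγS hγ => ?_) fun γ hγ hlt => ?_
  · have hcontains := (eventually_dilatedBox_iff hγ).2 hγS
    refine limsup_le_of_le (isBoundedUnder_ge_logMinRatio hΛ hk1 hk).isCoboundedUnder_le ?_
    filter_upwards [hcontains, eventually_iSup_pos_Tfilter] with τ hτ hsup
    exact logMinRatio_le_of_containsK hΛ hk1 hk hsup hτ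
  · have hratio := eventually_lt_of_limsup_lt hlt (isBoundedUnder_le_logMinRatio hΛ hk1 hk)
    refine (eventually_dilatedBox_iff hγ).1 ?_
    filter_upwards [hratio, eventually_iSup_pos_Tfilter] with τ hτ hsup
    exact containsK_of_logMinRatio_lt hΛ hk1 hk hsup hτ

end Transference

section Lattice

variable {ι : Type*} [Fintype ι] [DecidableEq ι] {B : Matrix ι ι ℝ}

theorem zero_notMem_closure_mulVec_int (hB : IsUnit B) :
    0 ∉ closure ({v | ∃ x : ι → ℤ, v = B.mulVec fun i => (x i : ℝ)} \ {0}) := by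
  have hsubset : {v | ∃ x : ι → ℤ, v = B.mulVec fun i => (x i : ℝ)} \ {0} ⊆
      {v | 1 ≤ ‖B⁻¹.mulVec v‖} := by
    rintro _ ⟨⟨x, rfl⟩, hne⟩
    have hx : x ≠ 0 := by
      rintro rfl
      refine hne ?_
      simp only [Pi.zero_apply, Int.cast_zero]
      exact B.mulVec_zero
    obtain ⟨j, hj⟩ := Function.ne_iff.1 hx
    have hone_le : (1 : ℝ) ≤ |(x j : ℝ)| := by exact_mod_cast Int.one_le_abs hj
    rw [Set.mem_ofPred_eq, Matrix.mulVec_mulVec,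
      Matrix.nonsing_inv_mul _ (B.isUnit_iff_isUnit_det.1 hB), Matrix.one_mulVec]
    exact hone_le.trans (norm_le_pi_norm (fun i => (x i : ℝ)) j)
  have hclosed : IsClosed {v | 1 ≤ ‖B⁻¹.mulVec v‖} := isClosed_le (by fun_prop) (by fun_prop)
  intro hmem
  have := closure_minimal hsubset hclosed hmem
  norm_num at this

theorem span_mulVec_int (hB : IsUnit B) :
    Submodule.span ℝ {v | ∃ x : ι → ℤ, v = B.mulVec fun i => (x i : ℝ)} = ⊤ := by
  rw [eq_top_iff, ← LinearMap.range_eq_top (f := B.mulVecLin) |>.2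
    (Matrix.mulVec_surjective_iff_isUnit.2 hB), Matrix.range_mulVecLin]
  refine Submodule.span_mono ?_
  rintro _ ⟨j, rfl⟩
  refine ⟨Pi.single j 1, ?_⟩
  rw [← B.mulVec_single_one]
  congr 1
  ext i
  simp [Pi.single_apply]

variable {d : ℕ} {Λ : Set (Fin d → ℝ)}

theorem IsUnimodularLattice.exists_isUnit (hΛ : IsUnimodularLattice d Λ) :
    ∃ B : Matrix (Fin d) (Fin d) ℝ, IsUnit B ∧
      Λ = {v | ∃ x : Fin d → ℤ, v = B.mulVec fun i => (x i : ℝ)} := by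
  obtain ⟨B, hdet, hΛB⟩ := hΛ
  refine ⟨B, B.isUnit_iff_isUnit_det.2 (isUnit_iff_ne_zero.2 (abs_pos.1 ?_)), hΛB⟩
  exact hdet ▸ one_pos

theorem IsUnimodularLattice.zero_notMem_closure (hΛ : IsUnimodularLattice d Λ) :
    0 ∉ closure (Λ \ {0}) := by
  obtain ⟨B, hB, rfl⟩ := hΛ.exists_isUnit
  exact zero_notMem_closure_mulVec_int hB

theorem IsUnimodularLattice.finrank_eq (hΛ : IsUnimodularLattice d Λ) : Set.finrank ℝ Λ = d := by
  obtain ⟨B, hB, rfl⟩ := hΛ.exists_isUnit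
  rw [Set.finrank, span_mulVec_int hB, finrank_top, Module.finrank_fin_fun]

end Lattice

theorem stmt18_general (d : ℕ) (hd : 2 ≤ d) (Λ : Set (Fin d → ℝ))
    (hΛ : 0 ∉ closure (Λ \ {0})) (k : ℕ) (hk1 : 1 ≤ k) (hk : k ≤ Set.finrank ℝ Λ) :
    (omegaLatHatK d Λ k ≤ omegaLatK d Λ k ∧
      (((-1 + 1 / (d : ℝ) : ℝ)) : EReal) ≤ omegaLatHatK d Λ k) ∧
    (-1 ≤ psiLowF d Λ k ∧ psiLowF d Λ k ≤ psiUpF d Λ k ∧ psiUpF d Λ k ≤ (d : ℝ) - 1) ∧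
    (∀ γ : ℝ, -1 < γ →
      (((γ : EReal) ≤ omegaLatK d Λ k ↔ psiLowF d Λ k ≤ -γ / (1 + γ)) ∧
       ((γ : EReal) ≤ omegaLatHatK d Λ k ↔ psiUpF d Λ k ≤ -γ / (1 + γ)))) ∧
    (∀ a : ℝ, omegaLatK d Λ k = (a : EReal) → (1 + a) * (1 + psiLowF d Λ k) = 1) ∧
    (psiLowF d Λ k = -1 → omegaLatK d Λ k = ⊤) ∧
    (∀ a : ℝ, omegaLatHatK d Λ k = (a : EReal) → (1 + a) * (1 + psiUpF d Λ k) = 1) ∧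
    (psiUpF d Λ k = -1 → omegaLatHatK d Λ k = ⊤) := by
  have : NeZero d := ⟨by omega⟩
  have := neBot_Tfilter hd
  have hle := psiLowF_le_psiUpF hΛ hk1 hk
  have hup := psiUpF_le_sub_one hΛ hk1 hk
  rw [omegaLatK_eq_dualExponent hΛ hk1 hk, omegaLatHatK_eq_dualExponent hΛ hk1 hk]
  exact ⟨⟨dualExponent_antitone hle, neg_one_add_one_div_le_dualExponent (by positivity) hup⟩,
    ⟨neg_one_le_psiLowF hΛ hk1 hk, hle, hup⟩,
    fun γ hγ => ⟨coe_le_dualExponent_iff hγ, coe_le_dualExponent_iff hγ⟩,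
    fun a => mul_eq_one_of_dualExponent_eq, fun h => dualExponent_of_le h.le,
    fun a => mul_eq_one_of_dualExponent_eq, fun h => dualExponent_of_le h.le⟩

theorem stmt18 (d : ℕ) (hd : 2 ≤ d) (Λ : Set (Fin d → ℝ))
    (hΛ : IsUnimodularLattice d Λ) (k : ℕ) (hk1 : 1 ≤ k) (hkd : k ≤ d) :
    (omegaLatHatK d Λ k ≤ omegaLatK d Λ k ∧
      (((-1 + 1 / (d : ℝ) : ℝ)) : EReal) ≤ omegaLatHatK d Λ k) ∧
    (-1 ≤ psiLowF d Λ k ∧ psiLowF d Λ k ≤ psiUpF d Λ k ∧ psiUpF d Λ k ≤ (d : ℝ) - 1) ∧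
    (∀ γ : ℝ, -1 < γ →
      (((γ : EReal) ≤ omegaLatK d Λ k ↔ psiLowF d Λ k ≤ -γ / (1 + γ)) ∧
       ((γ : EReal) ≤ omegaLatHatK d Λ k ↔ psiUpF d Λ k ≤ -γ / (1 + γ)))) ∧
    (∀ a : ℝ, omegaLatK d Λ k = (a : EReal) → (1 + a) * (1 + psiLowF d Λ k) = 1) ∧
    (psiLowF d Λ k = -1 → omegaLatK d Λ k = ⊤) ∧
    (∀ a : ℝ, omegaLatHatK d Λ k = (a : EReal) → (1 + a) * (1 + psiUpF d Λ k) = 1) ∧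
    (psiUpF d Λ k = -1 → omegaLatHatK d Λ k = ⊤) :=
  stmt18_general d hd Λ hΛ.zero_notMem_closure k hk1 (hkd.trans_eq hΛ.finrank_eq.symm)
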